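/- Let δ ≥ 3 be an integer, let G be a triangle-free graph with minimum degree at least δ, and let D ⊆ V(G) be a set that is not an isolating set of G. Let ω, β1, β2, β3, β4 be positive reals satisfying ω ≥ β4 ≥ β3 ≥ β2 ≥ β1 > 0, 2ω + 2(δ−1)β1 ≥ 1, and 5ω + 5(δ−2)·min(β1, β2/2) ≥ 2. Suppose in the isolation residual graph G_D^ι every connected component of the subgraph induced by the white vertices is isomorphic to K_2 or to the 5-cycle C_5, and for every blue vertex all of its neighbors lie in a single white component. Then there exists a D-desirable set. -/

import Mathlib

open Classical

/-- The closed neighborhood `N[D]` of a set `D` of vertices. -/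
def closedNbhd {V : Type*} (G : SimpleGraph V) (D : Set V) : Set V :=
  {v | v ∈ D ∨ ∃ u ∈ D, G.Adj u v}

/-- `S` is an isolating set of `G`: deleting `N[S]` leaves no edge. -/
def IsIsolatingSet {V : Type*} (G : SimpleGraph V) (S : Set V) : Prop :=
  ∀ u v : V, G.Adj u v → u ∈ closedNbhd G S ∨ v ∈ closedNbhd G S

/-- The isolation number: the minimum cardinality of an isolating set. -/
noncomputable def isolationNumber {V : Type*} [Fintype V] (G : SimpleGraph V) : ℕ :=
  sInf {k | ∃ S : Set V, IsIsolatingSet G S ∧ S.ncard = k}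

/-- A vertex is white (w.r.t. `D`) if it lies outside `N[D]` and has a neighbor outside `N[D]`. -/
def IsWhite {V : Type*} (G : SimpleGraph V) (D : Set V) (v : V) : Prop :=
  v ∉ closedNbhd G D ∧ ∃ u, G.Adj v u ∧ u ∉ closedNbhd G D

/-- A vertex is blue (w.r.t. `D`) if it lies in `N[D]` and has a white neighbor. -/
def IsBlue {V : Type*} (G : SimpleGraph V) (D : Set V) (v : V) : Prop :=
  v ∈ closedNbhd G D ∧ ∃ u, G.Adj v u ∧ IsWhite G D u

/-- The isolation residual graph `G_D^ι`: its edges are the edges of `G` incident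
with at least one white vertex. -/
def residualGraph {V : Type*} (G : SimpleGraph V) (D : Set V) : SimpleGraph V where
  Adj u v := G.Adj u v ∧ (IsWhite G D u ∨ IsWhite G D v)
  symm := ⟨fun u v h => ⟨h.1.symm, h.2.symm⟩⟩
  loopless := ⟨fun v h => G.loopless.irrefl v h.1⟩

/-- The degree of a vertex in the isolation residual graph. -/
noncomputable def resDegree {V : Type*} (G : SimpleGraph V) (D : Set V) (v : V) : ℕ :=
  ((residualGraph G D).neighborSet v).ncard

/-- The number of white neighbors of a vertex. -/
noncomputable def whiteNbhdCount {V : Type*} (G : SimpleGraph V) (D : Set V) (v : V) : ℕ :=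
  {u | G.Adj v u ∧ IsWhite G D u}.ncard

/-- The weight of a vertex in the isolation residual graph. -/
noncomputable def vertexWeight {V : Type*} (G : SimpleGraph V) (D : Set V)
    (ω β1 β2 β3 β4 : ℝ) (v : V) : ℝ :=
  if IsWhite G D v then ω
  else if IsBlue G D v then
    if 4 ≤ resDegree G D v then β4
    else if resDegree G D v = 3 then β3
    else if resDegree G D v = 2 then β2
    else β1
  else 0

/-- The total weight `w(G_D^ι)` of the isolation residual graph. -/
noncomputable def totalWeight {V : Type*} [Fintype V] (G : SimpleGraph V) (D : Set V)
    (ω β1 β2 β3 β4 : ℝ) : ℝ :=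
  ∑ v : V, vertexWeight G D ω β1 β2 β3 β4 v

/-- `A ⊆ V(G) \ D` is `D`-desirable if the weight decrease from `D` to `D ∪ A`
is at least `|A|`. -/
def Desirable {V : Type*} [Fintype V] (G : SimpleGraph V) (ω β1 β2 β3 β4 : ℝ)
    (D A : Set V) : Prop :=
  A ⊆ Dᶜ ∧
    (A.ncard : ℝ) ≤ totalWeight G D ω β1 β2 β3 β4 - totalWeight G (D ∪ A) ω β1 β2 β3 β4

/-- `G` is alluring w.r.t. the weights if for every `D` that is not an isolating set
there exists a `D`-desirable set. -/
def Alluring {V : Type*} [Fintype V] (G : SimpleGraph V) (ω β1 β2 β3 β4 : ℝ) : Prop :=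
  ∀ D : Set V, ¬ IsIsolatingSet G D → ∃ A : Set V, Desirable G ω β1 β2 β3 β4 D A

/-- `C` is the vertex set of a connected component of the subgraph of `G_D^ι`
induced by the white vertices. -/
def IsWhiteComponent {V : Type*} (G : SimpleGraph V) (D : Set V) (C : Set V) : Prop :=
  C ⊆ {v | IsWhite G D v} ∧ (G.induce C).Connected ∧
    ∀ u ∈ C, ∀ v : V, IsWhite G D v → G.Adj u v → v ∈ C

/-!
A vertex without white neighbors has weight zero, so passing from `D` to `D ∪ A` recovers the
whole weight of every vertex whose white neighbors all lie in `N[A]`. Choose a white component `C`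
and let `A ⊆ C` dominate it: one vertex of `K₂`, two of `C₅`. Every vertex of `N[C]` has its
white neighbors in `C`, so the weight drops by at least the weight of `N[C]`. The vertices of `C`
contribute `|C| ω`. The blue ones are bounded by double counting the edges leaving `C`: if `C`
induces a graph of maximum degree `k` there are at least `|C| (δ - k)` of them. In a triangle-free
graph the neighbors of a blue vertex in `C` are independent, so there are at most one (for `K₂`)
or two (for `C₅`) of them, and the weight of the blue vertex covers `β1`, respectively
`min(β1, β2 / 2)`, for each.
-/

section Coloring

variable {V : Type*} {G : SimpleGraph V} {D E C C' : Set V} {u v : V}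

lemma closedNbhd_mono (hDE : D ⊆ E) : closedNbhd G D ⊆ closedNbhd G E :=
  fun _ hv => hv.imp (@hDE _) fun ⟨u, hu, huv⟩ => ⟨u, hDE hu, huv⟩

lemma image_closedNbhd_subset {W : Type*} {H : SimpleGraph W} (f : H →g G) (S : Set W) :
    f '' closedNbhd H S ⊆ closedNbhd G (f '' S) := by
  rintro _ ⟨i, hi | ⟨j, hj, hji⟩, rfl⟩
  · exact Or.inl ⟨i, hi, rfl⟩
  · exact Or.inr ⟨f j, ⟨j, hj, rfl⟩, f.map_adj hji⟩

lemma IsWhite.of_subset (hDE : D ⊆ E) (hv : IsWhite G E v) : IsWhite G D v := by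
  obtain ⟨hvE, u, hvu, huE⟩ := hv
  exact ⟨fun h => hvE (closedNbhd_mono hDE h), u, hvu, fun h => huE (closedNbhd_mono hDE h)⟩

lemma IsWhite.exists_adj_isWhite (hv : IsWhite G D v) : ∃ u, G.Adj v u ∧ IsWhite G D u := by
  obtain ⟨hvD, u, hvu, huD⟩ := hv
  exact ⟨u, hvu, huD, v, hvu.symm, hvD⟩

lemma IsWhite.isBlue_of_adj (hu : IsWhite G D u) (hvu : G.Adj v u) (hv : ¬ IsWhite G D v) :
    IsBlue G D v :=
  ⟨by_contra fun hvD => hv ⟨hvD, u, hvu, hu.1⟩, u, hvu, hu⟩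

lemma exists_isWhite_of_not_isIsolatingSet (hD : ¬ IsIsolatingSet G D) :
    ∃ v, IsWhite G D v := by
  simp only [IsIsolatingSet, not_forall, not_or] at hD
  obtain ⟨u, v, huv, huD, hvD⟩ := hD
  exact ⟨u, huD, v, huv, hvD⟩

lemma exists_isWhiteComponent_of_not_isIsolatingSet (hD : ¬ IsIsolatingSet G D) :
    ∃ C, IsWhiteComponent G D C := by
  obtain ⟨w, hw⟩ := exists_isWhite_of_not_isIsolatingSet hD
  let K := (G.induce {v | IsWhite G D v}).connectedComponentMk ⟨w, hw⟩
  refine ⟨Subtype.val '' K.supp, ?_, ?_, ?_⟩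
  · rintro _ ⟨v, -, rfl⟩
    exact v.2
  · refine K.connected_toSimpleGraph.map (SimpleGraph.induceHom
      (SimpleGraph.Embedding.induce _).toHom (Set.mapsTo_image _ _)) ?_
    rintro ⟨_, v, hv, rfl⟩
    exact ⟨⟨v, hv⟩, rfl⟩
  · rintro _ ⟨u, hu, rfl⟩ v hv huv
    exact ⟨⟨v, hv⟩, K.mem_supp_of_adj_mem_supp hu huv, rfl⟩

lemma IsWhiteComponent.subset_of_mem_of_mem (hC : IsWhiteComponent G D C)
    (hC' : IsWhiteComponent G D C') (hv : v ∈ C) (hv' : v ∈ C') : C' ⊆ C := by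
  intro x hx
  by_contra hxC
  obtain ⟨p⟩ := hC'.2.1.preconnected ⟨v, hv'⟩ ⟨x, hx⟩
  obtain ⟨d, -, hfst, hsnd⟩ := p.exists_boundary_dart (Subtype.val ⁻¹' C) hv hxC
  exact hsnd (hC.2.2 _ hfst _ (hC'.1 d.snd.2) d.adj)

/-- `C` is detached from the other white vertices: all white neighbors of vertices in `N[C]` lie
in `C`, or equivalently no white vertex outside `C` is at distance at most two from `C`. -/
def IsDetached (G : SimpleGraph V) (D C : Set V) : Prop :=
  ∀ v ∈ closedNbhd G C, ∀ u, G.Adj v u → IsWhite G D u → u ∈ C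

lemma IsWhiteComponent.isDetached (hC : IsWhiteComponent G D C)
    (hone : ∀ x, IsBlue G D x → ∃ C' : Set V, IsWhiteComponent G D C' ∧
      ∀ y, (residualGraph G D).Adj x y → y ∈ C') :
    IsDetached G D C := by
  rintro v (hv | ⟨c, hc, hcv⟩) u hvu hu
  · exact hC.2.2 v hv u hu hvu
  by_cases hv : IsWhite G D v
  · exact hC.2.2 v (hC.2.2 c hc v hv hcv) u hu hvu
  · obtain ⟨C', hC', hvC'⟩ := hone v ((hC.1 hc).isBlue_of_adj hcv.symm hv)
    have hcC' : c ∈ C' := hvC' c ⟨hcv.symm, Or.inr (hC.1 hc)⟩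
    exact hC.subset_of_mem_of_mem hC' hc hcC' (hvC' u ⟨hvu, Or.inr hu⟩)

end Coloring

section Weights

/-- The weights are nonnegative, increase with the degree of a blue vertex, and are largest for
white vertices; this is what makes every vertex weight antitone in `D`. -/
structure MonotoneWeights (ω β1 β2 β3 β4 : ℝ) : Prop where
  nonneg : 0 ≤ β1
  one_le_two : β1 ≤ β2
  two_le_three : β2 ≤ β3
  three_le_four : β3 ≤ β4
  four_le_white : β4 ≤ ω

variable {V : Type*} {G : SimpleGraph V} {D E A : Set V} {v : V} {ω β1 β2 β3 β4 : ℝ}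

lemma resDegree_anti [Finite V] (hDE : D ⊆ E) (v : V) : resDegree G E v ≤ resDegree G D v :=
  Set.ncard_le_ncard
    (fun _ hu => ⟨hu.1, hu.2.imp (IsWhite.of_subset hDE) (IsWhite.of_subset hDE)⟩)

lemma vertexWeight_anti [Finite V] (hβ : MonotoneWeights ω β1 β2 β3 β4) (hDE : D ⊆ E) (v : V) :
    vertexWeight G E ω β1 β2 β3 β4 v ≤ vertexWeight G D ω β1 β2 β3 β4 v := by
  obtain ⟨h0, h12, h23, h34, h4⟩ := hβ
  have hwhite : IsWhite G E v → IsWhite G D v := IsWhite.of_subset hDE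
  have hblue : IsBlue G E v → IsWhite G D v ∨ IsBlue G D v := by
    rintro ⟨_, u, hvu, hu⟩
    exact or_iff_not_imp_left.2 ((hu.of_subset hDE).isBlue_of_adj hvu)
  have hdeg := resDegree_anti (G := G) hDE v
  unfold vertexWeight
  split_ifs <;> first | linarith | omega | tauto

lemma vertexWeight_of_isWhite (hv : IsWhite G D v) : vertexWeight G D ω β1 β2 β3 β4 v = ω :=
  if_pos hv

lemma vertexWeight_eq_zero (hv : ∀ u, G.Adj v u → ¬ IsWhite G D u) :
    vertexWeight G D ω β1 β2 β3 β4 v = 0 := by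
  have hwhite : ¬ IsWhite G D v := fun h =>
    let ⟨u, hvu, hu⟩ := h.exists_adj_isWhite
    hv u hvu hu
  have hblue : ¬ IsBlue G D v := fun ⟨_, u, hvu, hu⟩ => hv u hvu hu
  rw [vertexWeight, if_neg hwhite, if_neg hblue]

lemma IsBlue.beta1_le_vertexWeight (hβ : MonotoneWeights ω β1 β2 β3 β4) (hv : IsBlue G D v) :
    β1 ≤ vertexWeight G D ω β1 β2 β3 β4 v := by
  obtain ⟨-, h12, h23, h34, h4⟩ := hβ
  unfold vertexWeight
  split_ifs <;> linarith

lemma IsBlue.beta2_le_vertexWeight (hβ : MonotoneWeights ω β1 β2 β3 β4) (hv : IsBlue G D v)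
    (hdeg : 2 ≤ resDegree G D v) : β2 ≤ vertexWeight G D ω β1 β2 β3 β4 v := by
  obtain ⟨-, -, h23, h34, h4⟩ := hβ
  unfold vertexWeight
  split_ifs <;> first | linarith | omega

lemma sum_vertexWeight_le_totalWeight_sub [Fintype V] (hβ : MonotoneWeights ω β1 β2 β3 β4)
    (T : Finset V)
    (hT : ∀ v ∈ T, ∀ u, G.Adj v u → IsWhite G D u → u ∈ closedNbhd G A) :
    ∑ v ∈ T, vertexWeight G D ω β1 β2 β3 β4 v ≤
      totalWeight G D ω β1 β2 β3 β4 - totalWeight G (D ∪ A) ω β1 β2 β3 β4 := by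
  have hzero : ∀ v ∈ T, vertexWeight G (D ∪ A) ω β1 β2 β3 β4 v = 0 := fun v hv =>
    vertexWeight_eq_zero fun u hvu hu => hu.1 <|
      closedNbhd_mono Set.subset_union_right (hT v hv u hvu (hu.of_subset Set.subset_union_left))
  calc ∑ v ∈ T, vertexWeight G D ω β1 β2 β3 β4 v
      = ∑ v ∈ T, (vertexWeight G D ω β1 β2 β3 β4 v - vertexWeight G (D ∪ A) ω β1 β2 β3 β4 v) :=
        Finset.sum_congr rfl fun v hv => by rw [hzero v hv, sub_zero]
    _ ≤ ∑ v, (vertexWeight G D ω β1 β2 β3 β4 v - vertexWeight G (D ∪ A) ω β1 β2 β3 β4 v) :=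
        Finset.sum_le_univ_sum_of_nonneg fun v =>
          sub_nonneg.2 (vertexWeight_anti hβ Set.subset_union_left v)
    _ = _ := Finset.sum_sub_distrib _ _

end Weights

section Contacts

lemma exists_embedding_range_eq {V W : Type*} {G : SimpleGraph V} {H : SimpleGraph W}
    {C : Set V} (hiso : Nonempty (G.induce C ≃g H)) :
    ∃ f : H ↪g G, Set.range f = C := by
  obtain ⟨e⟩ := hiso
  refine ⟨(SimpleGraph.Embedding.induce C).comp e.symm.toEmbedding, ?_⟩
  change Set.range (Subtype.val ∘ e.symm) = C
  rw [e.symm.surjective.range_comp, Subtype.range_coe]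

variable {V ι : Type*} [Fintype ι] {G : SimpleGraph V} {H : SimpleGraph ι} {D : Set V} {b : V}
  {ω β1 β2 β3 β4 : ℝ}

/-- The vertices of `H` whose copies under an induced embedding of `H` in `G` are adjacent to `v`.
Counting inside `H` rather than inside the image lets the facts about `K₂` and `C₅` be decided. -/
noncomputable def contacts (f : H ↪g G) (v : V) : Finset ι := {i | G.Adj v (f i)}

lemma mem_contacts {f : H ↪g G} {v : V} {i : ι} : i ∈ contacts f v ↔ G.Adj v (f i) := by
  simp [contacts]

lemma card_contacts_apply [DecidableRel H.Adj] (f : H ↪g G) (i : ι) :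
    (contacts f (f i)).card = H.degree i := by
  rw [← H.card_neighborFinset_eq_degree]
  congr 1
  ext j
  rw [mem_contacts, H.mem_neighborFinset, f.map_adj_iff]

lemma sum_card_contacts [Fintype V] (f : H ↪g G) :
    ∑ v, (contacts f v).card = ∑ i, (G.neighborSet (f i)).ncard := by
  have hncard (i : ι) : (G.neighborSet (f i)).ncard =
      (Finset.univ.bipartiteBelow (fun v i => G.Adj v (f i)) i).card := by
    rw [← Set.ncard_coe_finset]
    congr 1
    ext v
    simp [Finset.bipartiteBelow, G.adj_comm]
  simp_rw [hncard]
  exact Finset.sum_card_bipartiteAbove_eq_sum_card_bipartiteBelow fun v i => G.Adj v (f i)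

lemma sum_card_contacts_compl_add_sum_degree [Fintype V] [DecidableRel H.Adj] (f : H ↪g G) :
    ∑ v ∈ (Finset.univ.map f.toEmbedding)ᶜ, (contacts f v).card + ∑ i, H.degree i =
      ∑ i, (G.neighborSet (f i)).ncard := by
  rw [← sum_card_contacts, ← Finset.sum_compl_add_sum (Finset.univ.map f.toEmbedding),
    Finset.sum_map]
  exact congrArg _ (Finset.sum_congr rfl fun i _ => (card_contacts_apply f i).symm)

lemma card_mul_sub_le_sum_card_contacts_compl [Fintype V] [DecidableRel H.Adj] (f : H ↪g G)
    {δ k : ℕ} (hδ : ∀ i, δ ≤ (G.neighborSet (f i)).ncard) (hk : ∀ i, H.degree i ≤ k) :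
    Fintype.card ι * ((δ : ℝ) - k) ≤
      ∑ v ∈ (Finset.univ.map f.toEmbedding)ᶜ, ((contacts f v).card : ℝ) := by
  have hdeg : Fintype.card ι * δ ≤
      ∑ v ∈ (Finset.univ.map f.toEmbedding)ᶜ, (contacts f v).card + Fintype.card ι * k :=
    calc Fintype.card ι * δ = ∑ _i : ι, δ := by simp
      _ ≤ ∑ i, (G.neighborSet (f i)).ncard := Finset.sum_le_sum fun i _ => hδ i
      _ = ∑ v ∈ (Finset.univ.map f.toEmbedding)ᶜ, (contacts f v).card + ∑ i, H.degree i :=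
          (sum_card_contacts_compl_add_sum_degree f).symm
      _ ≤ _ := by
          gcongr
          simpa using Finset.sum_le_card_nsmul Finset.univ _ k fun i _ => hk i
  rw [mul_sub, sub_le_iff_le_add]
  exact_mod_cast hdeg

lemma isIndepSet_contacts (htf : G.CliqueFree 3) (f : H ↪g G) (b : V) :
    H.IsIndepSet (contacts f b : Set ι) := by
  intro i hi j hj _ hij
  exact htf {b, f i, f j} (SimpleGraph.is3Clique_triple_iff.2
    ⟨mem_contacts.1 hi, mem_contacts.1 hj, f.map_adj_iff.2 hij⟩)

lemma card_contacts_le_resDegree [Finite V] (f : H ↪g G) (hwhite : ∀ i, IsWhite G D (f i))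
    (b : V) : (contacts f b).card ≤ resDegree G D b := by
  rw [← Finset.card_map f.toEmbedding, ← Set.ncard_coe_finset]
  refine Set.ncard_le_ncard fun v hv => ?_
  obtain ⟨i, hi, rfl⟩ := Finset.mem_map.1 hv
  exact ⟨mem_contacts.1 hi, Or.inr (hwhite i)⟩

lemma IsBlue.beta1_mul_card_contacts_le (hβ : MonotoneWeights ω β1 β2 β3 β4)
    (hb : IsBlue G D b) (f : H ↪g G) (hcard : (contacts f b).card ≤ 1) :
    β1 * (contacts f b).card ≤ vertexWeight G D ω β1 β2 β3 β4 b :=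
  (mul_le_of_le_one_right hβ.nonneg (mod_cast hcard)).trans (hb.beta1_le_vertexWeight hβ)

lemma IsBlue.min_mul_card_contacts_le [Finite V] (hβ : MonotoneWeights ω β1 β2 β3 β4)
    (hb : IsBlue G D b) (f : H ↪g G) (hwhite : ∀ i, IsWhite G D (f i))
    (hcard : (contacts f b).card ≤ 2) :
    min β1 (β2 / 2) * (contacts f b).card ≤ vertexWeight G D ω β1 β2 β3 β4 b := by
  have hβ1 := hb.beta1_le_vertexWeight hβ
  have hmin1 := min_le_left β1 (β2 / 2)
  have hmin2 := min_le_right β1 (β2 / 2)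
  have hnonneg := hβ.nonneg
  obtain h | h | h : (contacts f b).card = 0 ∨ (contacts f b).card = 1 ∨
      (contacts f b).card = 2 := by omega
  · rw [h]; push_cast; linarith
  · rw [h]; push_cast; linarith
  · have hβ2 := hb.beta2_le_vertexWeight hβ (h ▸ card_contacts_le_resDegree f hwhite b)
    rw [h]; push_cast; linarith

end Contacts

section Desirable

variable {V ι : Type*} [Fintype V] [Fintype ι] {G : SimpleGraph V} {H : SimpleGraph ι}
  {D : Set V} {ω β1 β2 β3 β4 m : ℝ} {δ k : ℕ}

lemma card_mul_add_le_sum_vertexWeight_closedNbhd (f : H ↪g G)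
    (hwhite : ∀ i, IsWhite G D (f i)) (hdet : IsDetached G D (Set.range f))
    (hm : ∀ b, IsBlue G D b → m * (contacts f b).card ≤ vertexWeight G D ω β1 β2 β3 β4 b) :
    Fintype.card ι * ω + m * ∑ v ∈ (Finset.univ.map f.toEmbedding)ᶜ, ((contacts f v).card : ℝ) ≤
      ∑ v ∈ (closedNbhd G (Set.range f)).toFinset, vertexWeight G D ω β1 β2 β3 β4 v := by
  set C : Finset V := Finset.univ.map f.toEmbedding with hC
  set N : Finset V := (closedNbhd G (Set.range f)).toFinset
  have hCN : C ⊆ N := fun v hv => by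
    obtain ⟨i, -, rfl⟩ := Finset.mem_map.1 hv
    exact Set.mem_toFinset.2 (Or.inl ⟨i, rfl⟩)
  have hinside : ∑ v ∈ C, vertexWeight G D ω β1 β2 β3 β4 v = Fintype.card ι * ω := by
    simp [hC, vertexWeight_of_isWhite (hwhite _)]
  have hfar : ∀ v ∈ Cᶜ, v ∉ N \ C → ((contacts f v).card : ℝ) = 0 := by
    intro v hvC hvN
    rw [Nat.cast_eq_zero, Finset.card_eq_zero, Finset.eq_empty_iff_forall_notMem]
    exact fun i hi => hvN (Finset.mem_sdiff.2 ⟨Set.mem_toFinset.2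
      (Or.inr ⟨f i, ⟨i, rfl⟩, (mem_contacts.1 hi).symm⟩), Finset.mem_compl.1 hvC⟩)
  have hblue : ∀ v ∈ N \ C, IsBlue G D v := by
    intro v hv
    obtain ⟨hvN, hvC⟩ := Finset.mem_sdiff.1 hv
    have hvf : v ∉ Set.range f := by simpa [hC] using hvC
    obtain ⟨_, ⟨i, rfl⟩, hiv⟩ := (Set.mem_toFinset.1 hvN).resolve_left hvf
    exact (hwhite i).isBlue_of_adj hiv.symm fun hv => hvf (hdet (f i) (Or.inl ⟨i, rfl⟩) v hiv hv)
  calc Fintype.card ι * ω + m * ∑ v ∈ Cᶜ, ((contacts f v).card : ℝ)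
      = Fintype.card ι * ω + ∑ v ∈ N \ C, m * ((contacts f v).card : ℝ) := by
        rw [← Finset.sum_subset (fun v hv => Finset.mem_compl.2 (Finset.mem_sdiff.1 hv).2) hfar,
          Finset.mul_sum]
    _ ≤ ∑ v ∈ C, vertexWeight G D ω β1 β2 β3 β4 v +
          ∑ v ∈ N \ C, vertexWeight G D ω β1 β2 β3 β4 v :=
        add_le_add hinside.ge (Finset.sum_le_sum fun v hv => hm v (hblue v hv))
    _ = _ := by rw [add_comm, Finset.sum_sdiff hCN]

lemma desirable_image [DecidableRel H.Adj] (hβ : MonotoneWeights ω β1 β2 β3 β4) (f : H ↪g G)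
    (hwhite : ∀ i, IsWhite G D (f i)) (hdet : IsDetached G D (Set.range f))
    (hδ : ∀ i, δ ≤ (G.neighborSet (f i)).ncard) (hk : ∀ i, H.degree i ≤ k) (hm0 : 0 ≤ m)
    (hm : ∀ b, IsBlue G D b → m * (contacts f b).card ≤ vertexWeight G D ω β1 β2 β3 β4 b)
    {S : Set ι} (hS : closedNbhd H S = Set.univ)
    (hcard : (S.ncard : ℝ) ≤ Fintype.card ι * (ω + (δ - k) * m)) :
    Desirable G ω β1 β2 β3 β4 D (f '' S) := by
  have hdom : Set.range f ⊆ closedNbhd G (f '' S) := by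
    simpa [hS] using image_closedNbhd_subset f.toHom S
  refine ⟨?_, ?_⟩
  · rintro _ ⟨i, -, rfl⟩ hi
    exact (hwhite i).1 (Or.inl hi)
  rw [Set.ncard_image_of_injective _ f.injective]
  calc (S.ncard : ℝ) ≤ Fintype.card ι * ω + m * (Fintype.card ι * (δ - k)) := by linarith
    _ ≤ Fintype.card ι * ω +
          m * ∑ v ∈ (Finset.univ.map f.toEmbedding)ᶜ, ((contacts f v).card : ℝ) := by
        gcongr
        exact card_mul_sub_le_sum_card_contacts_compl f hδ hk
    _ ≤ ∑ v ∈ (closedNbhd G (Set.range f)).toFinset, vertexWeight G D ω β1 β2 β3 β4 v :=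
        card_mul_add_le_sum_vertexWeight_closedNbhd f hwhite hdet hm
    _ ≤ _ := sum_vertexWeight_le_totalWeight_sub hβ _ fun v hv u hvu hu =>
        hdom (hdet v (Set.mem_toFinset.1 hv) u hvu hu)

end Desirable

section SmallGraphs

lemma closedNbhd_top_singleton {W : Type*} (w : W) :
    closedNbhd (⊤ : SimpleGraph W) {w} = Set.univ := by
  refine Set.eq_univ_of_forall fun v => ?_
  rcases eq_or_ne v w with rfl | hvw
  · exact Or.inl rfl
  · exact Or.inr ⟨w, rfl, hvw.symm⟩

lemma card_le_one_of_isIndepSet_top {W : Type*} {S : Finset W}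
    (hS : (⊤ : SimpleGraph W).IsIndepSet (S : Set W)) : S.card ≤ 1 :=
  Finset.card_le_one.2 fun _ hv _ hw => by_contra fun hvw => hS hv hw hvw hvw

lemma closedNbhd_cycleGraph_five :
    closedNbhd (SimpleGraph.cycleGraph 5) {0, 2} = Set.univ := by
  have hdom : ∀ i : Fin 5, (i = 0 ∨ i = 2) ∨
      (SimpleGraph.cycleGraph 5).Adj 0 i ∨ (SimpleGraph.cycleGraph 5).Adj 2 i := by decide
  ext i
  simpa [closedNbhd] using hdom i

lemma card_le_two_of_isIndepSet_cycleGraph_five {S : Finset (Fin 5)}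
    (hS : (SimpleGraph.cycleGraph 5).IsIndepSet (S : Set (Fin 5))) : S.card ≤ 2 := by
  revert S
  decide

end SmallGraphs

section Components

variable {V : Type*} [Fintype V] {G : SimpleGraph V} {D C : Set V} {ω β1 β2 β3 β4 : ℝ} {δ : ℕ}

lemma exists_desirable_of_iso_top (htf : G.CliqueFree 3) (hβ : MonotoneWeights ω β1 β2 β3 β4)
    (hwhite : ∀ v ∈ C, IsWhite G D v) (hdet : IsDetached G D C)
    (hδ : ∀ v ∈ C, δ ≤ (G.neighborSet v).ncard)
    (hK2 : 1 ≤ 2 * ω + 2 * ((δ : ℝ) - 1) * β1)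
    (hiso : Nonempty (G.induce C ≃g (⊤ : SimpleGraph (Fin 2)))) :
    ∃ A : Set V, Desirable G ω β1 β2 β3 β4 D A := by
  obtain ⟨f, rfl⟩ := exists_embedding_range_eq hiso
  refine ⟨_, desirable_image (k := 1) hβ f (fun i => hwhite _ ⟨i, rfl⟩) hdet
    (fun i => hδ _ ⟨i, rfl⟩) (fun i => (SimpleGraph.IsRegularOfDegree.top i).le) hβ.nonneg
    (fun b hb => hb.beta1_mul_card_contacts_le hβ f
      (card_le_one_of_isIndepSet_top (isIndepSet_contacts htf f b)))
    (closedNbhd_top_singleton 0) ?_⟩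
  rw [Set.ncard_singleton, Fintype.card_fin]
  push_cast
  linarith

lemma exists_desirable_of_iso_cycleGraph_five (htf : G.CliqueFree 3)
    (hβ : MonotoneWeights ω β1 β2 β3 β4)
    (hwhite : ∀ v ∈ C, IsWhite G D v) (hdet : IsDetached G D C)
    (hδ : ∀ v ∈ C, δ ≤ (G.neighborSet v).ncard)
    (hC5 : 2 ≤ 5 * ω + 5 * ((δ : ℝ) - 2) * min β1 (β2 / 2))
    (hiso : Nonempty (G.induce C ≃g SimpleGraph.cycleGraph 5)) :
    ∃ A : Set V, Desirable G ω β1 β2 β3 β4 D A := by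
  obtain ⟨f, rfl⟩ := exists_embedding_range_eq hiso
  have hwhite' (i : Fin 5) : IsWhite G D (f i) := hwhite _ ⟨i, rfl⟩
  have hmin : 0 ≤ min β1 (β2 / 2) :=
    le_min hβ.nonneg (div_nonneg (hβ.nonneg.trans hβ.one_le_two) two_pos.le)
  refine ⟨_, desirable_image (k := 2) hβ f hwhite' hdet (fun i => hδ _ ⟨i, rfl⟩)
    (fun _ => SimpleGraph.cycleGraph_degree_three_le.le) hmin
    (fun b hb => hb.min_mul_card_contacts_le hβ f hwhite'
      (card_le_two_of_isIndepSet_cycleGraph_five (isIndepSet_contacts htf f b)))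
    closedNbhd_cycleGraph_five ?_⟩
  rw [Set.ncard_pair (by decide), Fintype.card_fin]
  push_cast
  linarith

theorem exists_desirable_final_triangleFree_general (htf : G.CliqueFree 3)
    (hβ : MonotoneWeights ω β1 β2 β3 β4)
    (hwhite : ∀ v ∈ C, IsWhite G D v) (hdet : IsDetached G D C)
    (hδ : ∀ v ∈ C, δ ≤ (G.neighborSet v).ncard)
    (hK2 : 1 ≤ 2 * ω + 2 * ((δ : ℝ) - 1) * β1)
    (hC5 : 2 ≤ 5 * ω + 5 * ((δ : ℝ) - 2) * min β1 (β2 / 2))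
    (hiso : Nonempty (G.induce C ≃g (⊤ : SimpleGraph (Fin 2))) ∨
      Nonempty (G.induce C ≃g SimpleGraph.cycleGraph 5)) :
    ∃ A : Set V, Desirable G ω β1 β2 β3 β4 D A :=
  hiso.elim (exists_desirable_of_iso_top htf hβ hwhite hdet hδ hK2)
    (exists_desirable_of_iso_cycleGraph_five htf hβ hwhite hdet hδ hC5)

end Components

/-- Claim 6: the triangle-free analogue of the final claim. -/
theorem exists_desirable_final_triangleFree (δ : ℕ) (hδ : 3 ≤ δ) {V : Type*} [Fintype V]
    (G : SimpleGraph V) (htf : G.CliqueFree 3)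
    (hmin : ∀ v : V, δ ≤ (G.neighborSet v).ncard)
    (D : Set V) (hD : ¬ IsIsolatingSet G D) (ω β1 β2 β3 β4 : ℝ)
    (hm1 : ω ≥ β4) (hm2 : β4 ≥ β3) (hm3 : β3 ≥ β2) (hm4 : β2 ≥ β1) (hm5 : β1 > 0)
    (hc6a : 2 * ω + 2 * ((δ : ℝ) - 1) * β1 ≥ 1)
    (hc6b : 5 * ω + 5 * ((δ : ℝ) - 2) * min β1 (β2 / 2) ≥ 2)
    (hcomp : ∀ C : Set V, IsWhiteComponent G D C →
      Nonempty (G.induce C ≃g (⊤ : SimpleGraph (Fin 2))) ∨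
      Nonempty (G.induce C ≃g SimpleGraph.cycleGraph 5))
    (hone : ∀ x, IsBlue G D x → ∃ C : Set V, IsWhiteComponent G D C ∧
      ∀ y, (residualGraph G D).Adj x y → y ∈ C) :
    ∃ A : Set V, Desirable G ω β1 β2 β3 β4 D A := by
  obtain ⟨C, hC⟩ := exists_isWhiteComponent_of_not_isIsolatingSet hD
  exact exists_desirable_final_triangleFree_general htf ⟨hm5.le, hm4, hm3, hm2, hm1⟩ hC.1
    (hC.isDetached hone) (fun v _ => hmin v) hc6a hc6b (hcomp C hC)
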